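/- Let n, d be natural numbers and let σ : ℝ → ℝ be n-times continuously differentiable and not a polynomial. Then for every function F : ℝ^d → ℝ of class C^n, every compact set K ⊆ ℝ^d and every ε > 0, there exist a natural number N, vectors w_1, …, w_N ∈ ℝ^d and scalars b_1, …, b_N, β_1, …, β_N ∈ ℝ such that the single-hidden-layer network g(x) = Σ_{i=1}^N β_i · σ(⟨w_i, x⟩ + b_i) satisfies sup_{x ∈ K} ‖D^m F(x) − D^m g(x)‖ < ε for every order m ≤ n (where D^m denotes the m-th iterated Fréchet derivative). -/

import Mathlib

/-!
Let `V` be the space of `C^n` functions that networks approximate with their derivatives up to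
order `n`, uniformly on compact sets (`cnClosure` of `ridgeSpan`). It is a closed linear space,
stable under composition with affine maps and under averages over compact sets of parameters
(`CnFamily.integral_mem`). It also contains the limits of averages whose weights concentrate at a
point (`CnFamily.close_of_concentrated`). The proof enlarges the list of known members of `V`.

In dimension one, `V` contains the mollifications `s` of `σ`, which are smooth. Difference quotients
in `l` of `s (l t + b)` are averages of the derivative in `l`, so that `t ^ k * s⁽ᵏ⁾ (l t + b)` lies
in `V`; taking `l = 0` gives `t ^ k ∈ V` as soon as `s⁽ᵏ⁾ (b) ≠ 0` for some `s` and `b`. Otherwise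
all mollifications of `σ` are polynomials of degree less than `k`, and so is their pointwise limit
`σ`, which is excluded (`mem_polyLT_of_mollifications`). Hence `V` contains the monomials, and
their limit `exp`.

In dimension `d`, `V` therefore contains `x ↦ exp (L x)` for every linear form `L`, and the span of
these functions is an algebra. It contains `q x = C - ∑ i, cosh (x i)`, which has a strict maximum
at the origin, and the powers `q ^ k`. For a function `F` of compact support, the convolution of
`F` with `q ^ k`, normalized and restricted to a large ball, is an average of translates of `F` with
concentrating weights, hence close to `F` in `C^n`; on a smaller ball it agrees with an average of
translates of `q ^ k`, which lies in `V` (`exists_mem_close_of_support`). A cutoff extends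
this to all `F`.
-/

open scoped RealInnerProductSpace

section Density

set_option linter.unusedSectionVars false

open MeasureTheory Set Filter Topology
open scoped ContDiff Convolution

variable {E E' Λ : Type*} [NormedAddCommGroup E] [NormedSpace ℝ E]
  [NormedAddCommGroup E'] [NormedSpace ℝ E'] [NormedAddCommGroup Λ] [NormedSpace ℝ Λ]

/-! ### Approximation in `C^n` on compact sets -/

/-- `f` and `g` are `ε`-close on `K` together with their derivatives up to order `n`. -/
def CnClose (n : ℕ) (K : Set E) (ε : ℝ) (f g : E → ℝ) : Prop :=
  ∀ m : ℕ, m ≤ n → ∀ x ∈ K, ‖iteratedFDeriv ℝ m f x - iteratedFDeriv ℝ m g x‖ < ε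

lemma CnClose.trans {n : ℕ} {K : Set E} {ε δ : ℝ} {f g h : E → ℝ} (h₁ : CnClose n K ε f g)
    (h₂ : CnClose n K δ g h) : CnClose n K (ε + δ) f h := fun m hm x hx =>
  (norm_sub_le_norm_sub_add_norm_sub _ (iteratedFDeriv ℝ m g x) _).trans_lt
    (add_lt_add (h₁ m hm x hx) (h₂ m hm x hx))

/-- The `C^n` functions lying in the closure of `W` for the topology of locally uniform
convergence of the derivatives up to order `n`. -/
def cnClosure (n : ℕ) (W : Submodule ℝ (E → ℝ)) : Submodule ℝ (E → ℝ) where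
  carrier := {f | ContDiff ℝ n f ∧ ∀ K, IsCompact K → ∀ ε > 0,
    ∃ g ∈ W, ContDiff ℝ n g ∧ CnClose n K ε f g}
  zero_mem' := ⟨contDiff_const, fun K _ ε hε => ⟨0, W.zero_mem, contDiff_const, fun m _ x _ => by
    simpa using hε⟩⟩
  add_mem' := by
    rintro f f' ⟨hf, hf2⟩ ⟨hf', hf2'⟩
    refine ⟨hf.add hf', fun K hK ε hε => ?_⟩
    obtain ⟨g, hgW, hg, hfg⟩ := hf2 K hK (ε / 2) (by positivity)
    obtain ⟨g', hgW', hg', hfg'⟩ := hf2' K hK (ε / 2) (by positivity)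
    refine ⟨g + g', W.add_mem hgW hgW', hg.add hg', fun m hm x hx => ?_⟩
    have hm' : (m : WithTop ℕ∞) ≤ n := by exact_mod_cast hm
    rw [iteratedFDeriv_add_apply (hf.contDiffAt.of_le hm') (hf'.contDiffAt.of_le hm'),
      iteratedFDeriv_add_apply (hg.contDiffAt.of_le hm') (hg'.contDiffAt.of_le hm'),
      add_sub_add_comm]
    have := hfg m hm x hx
    have := hfg' m hm x hx
    exact (norm_add_le _ _).trans_lt (by linarith)
  smul_mem' := by
    rintro c f ⟨hf, hf2⟩
    refine ⟨contDiff_const.smul hf, fun K hK ε hε => ?_⟩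
    obtain ⟨g, hgW, hg, hfg⟩ := hf2 K hK (ε / (|c| + 1)) (by positivity)
    refine ⟨c • g, W.smul_mem c hgW, contDiff_const.smul hg, fun m hm x hx => ?_⟩
    have hm' : (m : WithTop ℕ∞) ≤ n := by exact_mod_cast hm
    rw [iteratedFDeriv_const_smul_apply (hf.contDiffAt.of_le hm'),
      iteratedFDeriv_const_smul_apply (hg.contDiffAt.of_le hm'), ← smul_sub, norm_smul,
      Real.norm_eq_abs]
    have := hfg m hm x hx
    rw [lt_div_iff₀ (by positivity)] at this
    nlinarith [norm_nonneg (iteratedFDeriv ℝ m f x - iteratedFDeriv ℝ m g x)]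

lemma le_cnClosure {n : ℕ} {W : Submodule ℝ (E → ℝ)} {f : E → ℝ} (hf : ContDiff ℝ n f)
    (hW : f ∈ W) : f ∈ cnClosure n W :=
  ⟨hf, fun _ _ _ hε => ⟨f, hW, hf, fun _ _ _ _ => by simpa using hε⟩⟩

/-- The `C^n`-closure is closed. -/
lemma mem_cnClosure_of_close {n : ℕ} {W : Submodule ℝ (E → ℝ)} {f : E → ℝ} (hf : ContDiff ℝ n f)
    (h : ∀ K, IsCompact K → ∀ ε > 0, ∃ g ∈ cnClosure n W, CnClose n K ε f g) :
    f ∈ cnClosure n W := by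
  refine ⟨hf, fun K hK ε hε => ?_⟩
  obtain ⟨g, hg, hfg⟩ := h K hK (ε / 2) (by positivity)
  obtain ⟨g', hgW', hg', hgg'⟩ := hg.2 K hK (ε / 2) (by positivity)
  exact ⟨g', hgW', hg', by simpa using hfg.trans hgg'⟩

lemma iteratedFDeriv_comp_affine {n : ℕ} {f : E' → ℝ} (hf : ContDiff ℝ n f) (L : E →L[ℝ] E')
    (c : E') {m : ℕ} (hm : m ≤ n) (x : E) :
    iteratedFDeriv ℝ m (fun x => f (L x + c)) x =
      (iteratedFDeriv ℝ m f (L x + c)).compContinuousLinearMap fun _ => L := by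
  have h := L.iteratedFDeriv_comp_right (f := fun y => f (y + c)) (n := n)
    (hf.comp (contDiff_id.add contDiff_const)) x (i := m) (by exact_mod_cast hm)
  rw [iteratedFDeriv_comp_add_right] at h
  exact h

/-- Composition with an affine map is continuous for `C^n` convergence on compact sets. -/
lemma comp_affine_mem_cnClosure {n : ℕ} {W : Submodule ℝ (E → ℝ)} {W' : Submodule ℝ (E' → ℝ)}
    (L : E →L[ℝ] E') (c : E') (hW : ∀ g ∈ W', (fun x => g (L x + c)) ∈ W) {f : E' → ℝ}
    (hf : f ∈ cnClosure n W') : (fun x => f (L x + c)) ∈ cnClosure n W := by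
  have hA : Continuous fun x => L x + c := by fun_prop
  refine ⟨hf.1.comp (L.contDiff.add contDiff_const), fun K hK ε hε => ?_⟩
  obtain ⟨g, hgW, hg, hfg⟩ := hf.2 _ (hK.image hA) (ε / (max 1 ‖L‖ ^ n)) (by positivity)
  refine ⟨_, hW g hgW, hg.comp (L.contDiff.add contDiff_const), fun m hm x hx => ?_⟩
  rw [iteratedFDeriv_comp_affine hf.1 L c hm, iteratedFDeriv_comp_affine hg L c hm]
  have h1 := hfg m hm _ (mem_image_of_mem _ hx)
  rw [lt_div_iff₀ (by positivity)] at h1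
  have h2 := ContinuousMultilinearMap.norm_compContinuousLinearMap_le
    (iteratedFDeriv ℝ m f (L x + c) - iteratedFDeriv ℝ m g (L x + c)) fun _ => L
  refine (h2.trans ?_).trans_lt h1
  simp only [Finset.prod_const, Finset.card_univ, Fintype.card_fin]
  gcongr
  exact (pow_le_pow_left₀ (norm_nonneg _) (le_max_right _ _) m).trans
    (pow_le_pow_right₀ (le_max_left _ _) hm)

/-- A family of `C^n` functions on `E` whose derivatives up to order `n` in the variable of `E`
depend continuously on the parameter and the variable jointly. -/
structure CnFamily (n : ℕ) (H : Λ → E → ℝ) : Prop where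
  contDiff : ∀ l, ContDiff ℝ n (H l)
  continuous : ∀ m ≤ n, Continuous fun p : Λ × E => iteratedFDeriv ℝ m (H p.1) p.2

lemma CnFamily.of_contDiff {n : ℕ} {H : Λ → E → ℝ} (h : ContDiff ℝ n fun p : Λ × E => H p.1 p.2) :
    CnFamily n H := by
  refine ⟨fun l => h.comp (contDiff_const.prodMk contDiff_id), fun m hm => ?_⟩
  have key (p : Λ × E) : iteratedFDeriv ℝ m (H p.1) p.2 =
      ContinuousMultilinearMap.compContinuousLinearMapL
        (fun _ : Fin m => ContinuousLinearMap.inr ℝ Λ E)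
        (iteratedFDeriv ℝ m (fun p : Λ × E => H p.1 p.2) p) := by
    have := iteratedFDeriv_comp_affine h (ContinuousLinearMap.inr ℝ Λ E) (p.1, 0) hm p.2
    simpa using this
  simp_rw [key]
  exact (ContinuousLinearMap.continuous _).comp
    (h.continuous_iteratedFDeriv (by exact_mod_cast hm))

lemma CnFamily.mul {n : ℕ} {H : Λ → E → ℝ} (h : CnFamily n H) {ψ : Λ → ℝ} (hψ : Continuous ψ) :
    CnFamily n fun l x => ψ l * H l x := by
  refine ⟨fun l => contDiff_const.mul (h.contDiff l), fun m hm => ?_⟩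
  have key (p : Λ × E) : iteratedFDeriv ℝ m (fun x => ψ p.1 * H p.1 x) p.2 =
      ψ p.1 • iteratedFDeriv ℝ m (H p.1) p.2 :=
    iteratedFDeriv_const_smul_apply (f := H p.1) (a := ψ p.1) (x := p.2)
      ((h.contDiff p.1).contDiffAt.of_le (by exact_mod_cast hm))
  simp_rw [key]
  exact (hψ.comp continuous_fst).smul (h.continuous m hm)

lemma CnFamily.continuous_fderiv {n : ℕ} {H : Λ → E → ℝ} (h : CnFamily n H) {m : ℕ}
    (hm : m < n) : Continuous fun p : Λ × E => fderiv ℝ (iteratedFDeriv ℝ m (H p.1)) p.2 := by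
  have := (continuousMultilinearCurryLeftEquiv ℝ (fun _ : Fin (m + 1) => E) ℝ).continuous.comp
    (h.continuous (m + 1) hm)
  simpa only [iteratedFDeriv_succ_eq_comp_left, Function.comp_def,
    LinearIsometryEquiv.apply_symm_apply] using this

/-- Nearby members of a `CnFamily` are `C^n`-close on compact sets. -/
lemma CnFamily.eventually_close {n : ℕ} {H : Λ → E → ℝ} (h : CnFamily n H) {K : Set E}
    (hK : IsCompact K) {ε : ℝ} (hε : 0 < ε) (l₀ : Λ) :
    ∀ᶠ l in 𝓝 l₀, CnClose n K ε (H l) (H l₀) := by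
  have (m : ℕ) (hm : m ∈ Set.Iic n) : ∀ᶠ l in 𝓝 l₀, ∀ x ∈ K,
      ‖iteratedFDeriv ℝ m (H l) x - iteratedFDeriv ℝ m (H l₀) x‖ < ε := by
    refine hK.eventually_forall_of_forall_eventually fun x _ => ?_
    have hc : Continuous fun z : Λ × E =>
        ‖iteratedFDeriv ℝ m (H z.1) z.2 - iteratedFDeriv ℝ m (H l₀) z.2‖ :=
      ((h.continuous m hm).sub ((h.continuous m hm).comp
        (continuous_const.prodMk continuous_snd))).norm
    exact hc.continuousAt.eventually_lt continuousAt_const (by simpa using hε)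
  exact ((Set.finite_Iic n).eventually_all.2 this)

section Integral

/-! ### Averages of families of functions -/

variable [MeasurableSpace Λ] [BorelSpace Λ] {ν : Measure Λ} [IsLocallyFiniteMeasure ν]

lemma hasFDerivAt_setIntegral_compact {Y : Type*} [NormedAddCommGroup Y] [NormedSpace ℝ Y]
    {S : Set Λ} (hS : IsCompact S) {H : Λ → E → Y} {H' : Λ → E → E →L[ℝ] Y}
    (hH : Continuous fun p : Λ × E => H p.1 p.2) (hH' : Continuous fun p : Λ × E => H' p.1 p.2)
    (hd : ∀ l x, HasFDerivAt (H l) (H' l x) x) (x₀ : E) :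
    HasFDerivAt (fun x => ∫ l in S, H l x ∂ν) (∫ l in S, H' l x₀ ∂ν) x₀ := by
  have c1 (x : E) : Continuous fun l => H l x := hH.comp (continuous_id.prodMk continuous_const)
  have c2 (x : E) : Continuous fun l => H' l x := hH'.comp (continuous_id.prodMk continuous_const)
  obtain ⟨M, hM⟩ := hS.exists_bound_of_continuousOn (c2 x₀).continuousOn
  have hev : ∀ᶠ x in 𝓝 x₀, ∀ l ∈ S, ‖H' l x‖ < M + 1 := by
    refine hS.eventually_forall_of_forall_eventually fun l hl => ?_
    have : Continuous fun z : E × Λ => ‖H' z.2 z.1‖ := (hH'.comp continuous_swap).norm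
    exact this.continuousAt.eventually_lt continuousAt_const
      ((hM l hl).trans_lt (lt_add_one M))
  refine hasFDerivAt_integral_of_dominated_of_fderiv_le (bound := fun _ => M + 1) hev
    (Eventually.of_forall fun x =>
      ((c1 x).continuousOn.integrableOn_compact hS).aestronglyMeasurable)
    ((c1 x₀).continuousOn.integrableOn_compact hS)
    ((c2 x₀).continuousOn.integrableOn_compact hS).aestronglyMeasurable ?_
    (continuousOn_const.integrableOn_compact hS) (Eventually.of_forall fun l x _ => hd l x)
  exact (ae_restrict_mem hS.measurableSet).mono fun l hl x hx => (hx l hl).le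

lemma continuous_setIntegral_compact [SecondCountableTopology Λ] [LocallyCompactSpace E]
    {Y : Type*} [NormedAddCommGroup Y] [NormedSpace ℝ Y]
    {S : Set Λ} (hS : IsCompact S) {H : Λ → E → Y}
    (hH : Continuous fun p : Λ × E => H p.1 p.2) :
    Continuous fun x => ∫ l in S, H l x ∂ν :=
  continuous_parametric_integral_of_continuous (f := fun x l => H l x)
    (hH.comp continuous_swap) hS

/-- Derivatives of an average of a `CnFamily` over a compact set of parameters are computed under
the integral sign. -/
lemma CnFamily.iteratedFDeriv_integral {n : ℕ} {H : Λ → E → ℝ} (h : CnFamily n H) {S : Set Λ}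
    (hS : IsCompact S) {m : ℕ} (hm : m ≤ n) (x : E) :
    iteratedFDeriv ℝ m (fun x => ∫ l in S, H l x ∂ν) x =
      ∫ l in S, iteratedFDeriv ℝ m (H l) x ∂ν := by
  induction m generalizing x with
  | zero =>
    simp only [iteratedFDeriv_zero_eq_comp, Function.comp_def]
    exact ((continuousMultilinearCurryFin0 ℝ E ℝ).symm.toContinuousLinearEquiv.integral_comp_comm
      fun l => H l x).symm
  | succ m ih =>
    have ih' := funext (ih (by omega))
    rw [iteratedFDeriv_succ_eq_comp_left, Function.comp_apply, ih']
    have hfd : HasFDerivAt (fun x => ∫ l in S, iteratedFDeriv ℝ m (H l) x ∂ν)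
        (∫ l in S, fderiv ℝ (iteratedFDeriv ℝ m (H l)) x ∂ν) x := by
      refine hasFDerivAt_setIntegral_compact
        (H' := fun l x => fderiv ℝ (iteratedFDeriv ℝ m (H l)) x) hS
        (h.continuous m (by omega)) (h.continuous_fderiv hm) (fun l x => ?_) x
      exact ((h.contDiff l).differentiable_iteratedFDeriv (by exact_mod_cast hm) x).hasFDerivAt
    rw [hfd.fderiv]
    let e : (E →L[ℝ] E [×m]→L[ℝ] ℝ) ≃L[ℝ] (E [×m + 1]→L[ℝ] ℝ) :=
      (continuousMultilinearCurryLeftEquiv ℝ (fun _ : Fin (m + 1) => E)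
        ℝ).symm.toContinuousLinearEquiv
    exact (ContinuousLinearEquiv.integral_comp_comm (𝕜 := ℝ) (μ := ν.restrict S) e
      fun l => fderiv ℝ (iteratedFDeriv ℝ m (H l)) x).symm

lemma CnFamily.contDiff_integral [SecondCountableTopology Λ] [LocallyCompactSpace E]
    {n : ℕ} {H : Λ → E → ℝ} (h : CnFamily n H) {S : Set Λ}
    (hS : IsCompact S) : ContDiff ℝ n fun x => ∫ l in S, H l x ∂ν := by
  rw [contDiff_nat_iff_continuous_differentiable]
  refine ⟨fun m hm => ?_, fun m hm x => ?_⟩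
  · simp_rw [h.iteratedFDeriv_integral hS hm]
    exact continuous_setIntegral_compact hS (h.continuous m hm)
  · simp_rw [h.iteratedFDeriv_integral hS hm.le]
    refine (hasFDerivAt_setIntegral_compact
        (H' := fun l x => fderiv ℝ (iteratedFDeriv ℝ m (H l)) x) hS
        (h.continuous m hm.le) (h.continuous_fderiv hm) (fun l x => ?_) x).differentiableAt
    exact ((h.contDiff l).differentiable_iteratedFDeriv (by exact_mod_cast hm) x).hasFDerivAt

/-- Averages of members of a `CnFamily` stay in the `C^n`-closure of a subspace. The integral is
approximated by finite sums, the set of parameters being cut into small pieces. -/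
lemma CnFamily.integral_mem [SecondCountableTopology Λ] [LocallyCompactSpace E]
    {n : ℕ} {H : Λ → E → ℝ} (h : CnFamily n H) {S : Set Λ}
    (hS : IsCompact S) {W : Submodule ℝ (E → ℝ)} (hW : ∀ l, H l ∈ cnClosure n W) :
    (fun x => ∫ l in S, H l x ∂ν) ∈ cnClosure n W := by
  refine mem_cnClosure_of_close (h.contDiff_integral hS) fun K hK ε hε => ?_
  have hfin : ν S < ⊤ := hS.measure_lt_top
  set η : ℝ := ε / (ν.real S + 1) with hη
  have hη0 : 0 < η := by positivity
  have hI (m : ℕ) (hm : m ≤ n) (x : E) : IntegrableOn (fun l => iteratedFDeriv ℝ m (H l) x) S ν :=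
    ((h.continuous m hm).comp (continuous_id.prodMk continuous_const)).continuousOn
      |>.integrableOn_compact hS
  -- The induction hypothesis is uniform in measurable subsets, so that unions can be made disjoint.
  have key : ∃ A, S ⊆ A ∧ MeasurableSet A ∧ ∀ B ⊆ A, MeasurableSet B → ∃ g ∈ cnClosure n W,
      ∀ m ≤ n, ∀ x ∈ K, ‖∫ l in B ∩ S, iteratedFDeriv ℝ m (H l) x ∂ν - iteratedFDeriv ℝ m g x‖ ≤
        η * ν.real (B ∩ S) := by
    refine hS.induction_on (p := fun T => ∃ A, T ⊆ A ∧ MeasurableSet A ∧ ∀ B ⊆ A, MeasurableSet B →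
      ∃ g ∈ cnClosure n W, ∀ m ≤ n, ∀ x ∈ K,
        ‖∫ l in B ∩ S, iteratedFDeriv ℝ m (H l) x ∂ν - iteratedFDeriv ℝ m g x‖ ≤
        η * ν.real (B ∩ S)) ?_ ?_ ?_ ?_
    · refine ⟨∅, subset_rfl, MeasurableSet.empty, fun B hB _ => ⟨0, zero_mem _, fun m _ x _ => ?_⟩⟩
      obtain rfl := subset_empty_iff.1 hB
      simp
    · rintro s t hst ⟨A, hA, hA'⟩
      exact ⟨A, hst.trans hA, hA'⟩
    · rintro s t ⟨A, hsA, hA, hA'⟩ ⟨A₂, htA, hA₂, hA₂'⟩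
      refine ⟨A ∪ A₂, union_subset_union hsA htA, hA.union hA₂, fun B hB hBm => ?_⟩
      obtain ⟨g, hg, hg'⟩ := hA' (B ∩ A) inter_subset_right (hBm.inter hA)
      obtain ⟨g₂, hg₂, hg₂'⟩ := hA₂' (B \ A) (fun l hl => (hB hl.1).resolve_left hl.2)
        (hBm.diff hA)
      refine ⟨g + g₂, add_mem hg hg₂, fun m hm x hx => ?_⟩
      have hu : B ∩ S = (B ∩ A) ∩ S ∪ (B \ A) ∩ S := by
        rw [← union_inter_distrib_right, inter_union_sdiff]
      have hdis : Disjoint ((B ∩ A) ∩ S) ((B \ A) ∩ S) :=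
        (disjoint_sdiff_right.mono_left inter_subset_right).mono inter_subset_left
          inter_subset_left
      have hmeas : MeasurableSet ((B \ A) ∩ S) := (hBm.diff hA).inter hS.measurableSet
      have hm' : (m : WithTop ℕ∞) ≤ n := by exact_mod_cast hm
      rw [hu, setIntegral_union hdis hmeas ((hI m hm x).mono_set inter_subset_right)
        ((hI m hm x).mono_set inter_subset_right),
        measureReal_union hdis hmeas (measure_lt_top_of_subset inter_subset_right hfin.ne).ne
        (measure_lt_top_of_subset inter_subset_right hfin.ne).ne,
        iteratedFDeriv_add_apply (hg.1.contDiffAt.of_le hm') (hg₂.1.contDiffAt.of_le hm'),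
        add_sub_add_comm, mul_add]
      exact (norm_add_le _ _).trans (add_le_add (hg' m hm x hx) (hg₂' m hm x hx))
    · intro l₀ _
      obtain ⟨U, hU, hUo, hlU⟩ := eventually_nhds_iff.1 (h.eventually_close hK hη0 l₀)
      refine ⟨U, mem_nhdsWithin_of_mem_nhds (hUo.mem_nhds hlU), U, subset_rfl, hUo.measurableSet,
        fun B hB hBm => ⟨ν.real (B ∩ S) • H l₀, Submodule.smul_mem _ _ (hW l₀),
          fun m hm x hx => ?_⟩⟩
      have hfin' := (measure_lt_top_of_subset (inter_subset_right (s := B)) hfin.ne)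
      have e : ∫ l in B ∩ S, iteratedFDeriv ℝ m (H l₀) x ∂ν =
          ν.real (B ∩ S) • iteratedFDeriv ℝ m (H l₀) x := setIntegral_const _
      rw [iteratedFDeriv_const_smul_apply
        ((h.contDiff l₀).contDiffAt.of_le (by exact_mod_cast hm)), ← e,
        ← integral_sub ((hI m hm x).mono_set inter_subset_right)
          (integrableOn_const hfin'.ne)]
      exact norm_setIntegral_le_of_norm_le_const hfin' fun l hl => (hU l (hB hl.1) m hm x hx).le
  obtain ⟨A, hSA, hA, hA'⟩ := key
  obtain ⟨g, hg, hg'⟩ := hA' A subset_rfl hA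
  refine ⟨g, hg, fun m hm x hx => ?_⟩
  rw [h.iteratedFDeriv_integral hS hm]
  have := hg' m hm x hx
  rw [inter_eq_self_of_subset_right hSA] at this
  refine this.trans_lt ?_
  rw [hη, div_mul_eq_mul_div, div_lt_iff₀ (by positivity)]
  nlinarith [measureReal_nonneg (μ := ν) (s := S)]

/-- Averages against weights concentrating at `l₀`, in the sense that their first absolute moments
about `l₀` tend to zero, converge to the member of the family at `l₀` in `C^n` on compact sets. -/
lemma CnFamily.close_of_concentrated {n : ℕ} {H : Λ → E → ℝ} (h : CnFamily n H) {S : Set Λ}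
    (hS : IsCompact S) (l₀ : Λ) {K : Set E} (hK : IsCompact K) {ε : ℝ} (hε : 0 < ε) :
    ∃ δ > 0, ∀ T ⊆ S, IsCompact T → ∀ w : Λ → ℝ, Continuous w → (∀ l ∈ T, 0 ≤ w l) →
      ∫ l in T, w l ∂ν = 1 → ∫ l in T, w l * ‖l - l₀‖ ∂ν < δ →
      CnClose n K ε (H l₀) (fun x => ∫ l in T, w l * H l x ∂ν) := by
  obtain ⟨ρ, hρ, hclose⟩ := Metric.eventually_nhds_iff.1
    (h.eventually_close hK (half_pos hε) l₀)
  have hbd : ∃ M : ℝ, 0 ≤ M ∧ ∀ m ≤ n, ∀ l ∈ S, ∀ x ∈ K,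
      ‖iteratedFDeriv ℝ m (H l) x - iteratedFDeriv ℝ m (H l₀) x‖ ≤ M := by
    have (m : ℕ) : ∃ M : ℝ, m ≤ n → ∀ l ∈ S, ∀ x ∈ K,
        ‖iteratedFDeriv ℝ m (H l) x - iteratedFDeriv ℝ m (H l₀) x‖ ≤ M := by
      by_cases hm : m ≤ n
      · have hc : Continuous fun z : Λ × E =>
            iteratedFDeriv ℝ m (H z.1) z.2 - iteratedFDeriv ℝ m (H l₀) z.2 :=
          ((h.continuous m hm).sub ((h.continuous m hm).comp
            (continuous_const.prodMk continuous_snd)))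
        obtain ⟨M, hM⟩ := (hS.prod hK).exists_bound_of_continuousOn hc.continuousOn
        exact ⟨M, fun _ l hl x hx => hM (l, x) ⟨hl, hx⟩⟩
      · exact ⟨0, fun h => absurd h hm⟩
    choose M hM using this
    refine ⟨∑ m ∈ Finset.range (n + 1), |M m|, by positivity, fun m hm l hl x hx =>
      (hM m hm l hl x hx).trans ((le_abs_self _).trans ?_)⟩
    exact Finset.single_le_sum (f := fun m => |M m|) (fun i _ => abs_nonneg _)
      (Finset.mem_range.2 (by omega))
  obtain ⟨M, hM0, hM⟩ := hbd
  -- Near `l₀` the difference is at most `ε / 2`, elsewhere at most `M ≤ (M / ρ) * ‖l - l₀‖`.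
  have hle : ∀ m ≤ n, ∀ l ∈ S, ∀ x ∈ K,
      ‖iteratedFDeriv ℝ m (H l) x - iteratedFDeriv ℝ m (H l₀) x‖ ≤ ε / 2 + M / ρ * ‖l - l₀‖ := by
    intro m hm l hl x hx
    rcases lt_or_ge ‖l - l₀‖ ρ with hlt | hge
    · have := hclose (by rwa [dist_eq_norm]) m hm x hx
      have : 0 ≤ M / ρ * ‖l - l₀‖ := by positivity
      linarith
    · have h1 := hM m hm l hl x hx
      have : M ≤ M / ρ * ‖l - l₀‖ := by
        rw [div_mul_eq_mul_div, le_div_iff₀ hρ]; gcongr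
      linarith
  refine ⟨ε / (2 * (M / ρ + 1)), by positivity, fun T hTS hT w hw hw0 hw1 hwm m hm x hx => ?_⟩
  rw [(h.mul hw).iteratedFDeriv_integral hT hm, norm_sub_rev]
  have hder (l : Λ) : iteratedFDeriv ℝ m (fun x => w l * H l x) x =
      w l • iteratedFDeriv ℝ m (H l) x :=
    iteratedFDeriv_const_smul_apply (f := H l) (a := w l) (x := x)
      ((h.contDiff l).contDiffAt.of_le (by exact_mod_cast hm))
  have hcD : Continuous fun l => iteratedFDeriv ℝ m (H l) x :=
    (h.continuous m hm).comp (continuous_id.prodMk continuous_const)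
  have e1 : iteratedFDeriv ℝ m (H l₀) x = ∫ l in T, w l • iteratedFDeriv ℝ m (H l₀) x ∂ν := by
    rw [integral_smul_const, hw1, one_smul]
  simp_rw [hder]
  have i1 : IntegrableOn (fun l => w l • iteratedFDeriv ℝ m (H l) x) T ν :=
    (hw.smul hcD).continuousOn.integrableOn_compact hT
  have i2 : IntegrableOn (fun l => w l • iteratedFDeriv ℝ m (H l₀) x) T ν :=
    (hw.smul continuous_const).continuousOn.integrableOn_compact hT
  rw [e1, ← integral_sub i1 i2]
  simp_rw [← smul_sub]
  calc _ ≤ ∫ l in T, (w l * (ε / 2) + M / ρ * (w l * ‖l - l₀‖)) ∂ν := by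
        refine norm_integral_le_of_norm_le ?_ ?_
        · exact (by fun_prop : Continuous fun l => w l * (ε / 2) + M / ρ *
            (w l * ‖l - l₀‖)).continuousOn.integrableOn_compact hT
        · refine (ae_restrict_mem hT.measurableSet).mono fun l hl => ?_
          rw [norm_smul, Real.norm_of_nonneg (hw0 l hl)]
          have := mul_le_mul_of_nonneg_left (hle m hm l (hTS hl) x hx) (hw0 l hl)
          linarith
    _ = ε / 2 + M / ρ * ∫ l in T, w l * ‖l - l₀‖ ∂ν := by
        rw [integral_add, integral_mul_const, hw1, integral_const_mul, one_mul]
        · exact (by fun_prop :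
            Continuous fun l => w l * (ε / 2)).continuousOn.integrableOn_compact hT
        · exact (by fun_prop : Continuous fun l =>
            M / ρ * (w l * ‖l - l₀‖)).continuousOn.integrableOn_compact hT
    _ ≤ ε / 2 + M / ρ * (ε / (2 * (M / ρ + 1))) := by gcongr
    _ < ε := by
        have : 0 ≤ M / ρ := by positivity
        rw [← mul_div_assoc, ← lt_sub_iff_add_lt', div_lt_iff₀ (by positivity)]
        nlinarith

end Integral

/-- If `l ↦ G l` is a family in the `C^n`-closure of `W`, so is its derivative in the parameter:
the difference quotients are averages of the derivative over shrinking intervals. -/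
lemma deriv_param_mem_cnClosure [LocallyCompactSpace E] {n : ℕ} {W : Submodule ℝ (E → ℝ)}
    {G G' : ℝ → E → ℝ} (hG : ∀ l, G l ∈ cnClosure n W) (hG' : CnFamily n G')
    (hd : ∀ l x, HasDerivAt (fun l => G l x) (G' l x) l) (l₀ : ℝ) : G' l₀ ∈ cnClosure n W := by
  refine mem_cnClosure_of_close (hG'.contDiff l₀) fun K hK ε hε => ?_
  obtain ⟨δ, hδ, hclose⟩ := hG'.close_of_concentrated (ν := volume)
    (isCompact_Icc (a := l₀) (b := l₀ + 1)) l₀ hK hε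
  -- The intervals `[l₀, l₀ + h]` have to stay inside the fixed compact set `[l₀, l₀ + 1]`.
  set h : ℝ := min 1 (δ / 2)
  have h0 : 0 < h := by positivity
  have h1 : h ≤ 1 := min_le_left _ _
  have hhδ : h < δ := (min_le_right _ _).trans_lt (by linarith)
  have hone : ∫ _ in Icc l₀ (l₀ + h), h⁻¹ = (1 : ℝ) := by
    rw [setIntegral_const, Real.volume_real_Icc_of_le (by linarith), smul_eq_mul]
    field_simp
    ring
  have := hclose (Icc l₀ (l₀ + h)) (Icc_subset_Icc_right (by linarith)) isCompact_Icc
    (fun _ => h⁻¹) continuous_const (fun _ _ => by positivity) hone ?_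
  · refine ⟨_, ?_, this⟩
    have hF : (fun x => ∫ l in Icc l₀ (l₀ + h), h⁻¹ * G' l x) = h⁻¹ • (G (l₀ + h) - G l₀) := by
      funext x
      have hc : Continuous fun l => G' l x := by
        have := (hG'.continuous 0 (zero_le)).comp (continuous_id.prodMk (continuous_const (y := x)))
        simp only [iteratedFDeriv_zero_eq_comp, Function.comp_def] at this
        have := (continuousMultilinearCurryFin0 ℝ E ℝ).continuous.comp this
        simpa only [Function.comp_def, LinearIsometryEquiv.apply_symm_apply, id_eq] using this
      rw [integral_const_mul, integral_Icc_eq_integral_Ioc,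
        ← intervalIntegral.integral_of_le (by linarith),
        intervalIntegral.integral_eq_sub_of_hasDerivAt (fun l _ => hd l x)
          (hc.intervalIntegrable _ _)]
      rfl
    rw [hF]
    exact Submodule.smul_mem _ _ (sub_mem (hG _) (hG _))
  · refine lt_of_le_of_lt ?_ hhδ
    calc ∫ l in Icc l₀ (l₀ + h), h⁻¹ * ‖l - l₀‖ ≤ ∫ _ in Icc l₀ (l₀ + h), h⁻¹ * h := by
          refine setIntegral_mono_on ?_ ?_ measurableSet_Icc fun l hl => ?_
          · exact (by fun_prop : Continuous fun l : ℝ =>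
              h⁻¹ * ‖l - l₀‖).continuousOn.integrableOn_compact isCompact_Icc
          · exact continuousOn_const.integrableOn_compact isCompact_Icc
          · rw [Real.norm_of_nonneg (by linarith [hl.1])]
            gcongr
            linarith [hl.2]
      _ = h := by rw [integral_mul_const, hone, one_mul]

/-! ### Ridge functions and polynomials in one variable -/

/-- The span of the ridge functions `x ↦ σ (L x + b)`, that is, the space of single-hidden-layer
networks on `E` with activation `σ`. -/
def ridgeSpan (E : Type*) [NormedAddCommGroup E] [NormedSpace ℝ E] (σ : ℝ → ℝ) :
    Submodule ℝ (E → ℝ) :=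
  Submodule.span ℝ (range fun p : (E →L[ℝ] ℝ) × ℝ => fun x => σ (p.1 x + p.2))

lemma ridgeSpan_comp_affine {σ : ℝ → ℝ} (A : E →L[ℝ] E') (c : E') {g : E' → ℝ}
    (hg : g ∈ ridgeSpan E' σ) : (fun x => g (A x + c)) ∈ ridgeSpan E σ := by
  have : ridgeSpan E' σ ≤ (ridgeSpan E σ).comap (LinearMap.funLeft ℝ ℝ fun x => A x + c) := by
    refine Submodule.span_le.2 ?_
    rintro _ ⟨⟨L, b⟩, rfl⟩
    refine Submodule.subset_span ⟨(L.comp A, L c + b), ?_⟩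
    funext x
    simp [LinearMap.funLeft, add_assoc]
  exact this hg

lemma comp_affine_mem {n : ℕ} {σ : ℝ → ℝ} (A : E →L[ℝ] E') (c : E') {f : E' → ℝ}
    (hf : f ∈ cnClosure n (ridgeSpan E' σ)) :
    (fun x => f (A x + c)) ∈ cnClosure n (ridgeSpan E σ) :=
  comp_affine_mem_cnClosure A c (fun _ => ridgeSpan_comp_affine A c) hf

lemma comp_affine_real_mem {n : ℕ} {σ f : ℝ → ℝ} (l b : ℝ)
    (hf : f ∈ cnClosure n (ridgeSpan ℝ σ)) :
    (fun t => f (l * t + b)) ∈ cnClosure n (ridgeSpan ℝ σ) := by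
  simpa using comp_affine_mem (l • ContinuousLinearMap.id ℝ ℝ) b hf

lemma activation_mem {n : ℕ} {σ : ℝ → ℝ} (hσ : ContDiff ℝ n σ) :
    σ ∈ cnClosure n (ridgeSpan ℝ σ) :=
  le_cnClosure hσ (Submodule.subset_span ⟨(ContinuousLinearMap.id ℝ ℝ, 0), by simp⟩)

/-- Differentiating `s (l * t + b)` `j` times in `l` yields `t ^ j * s⁽ʲ⁾ (l * t + b)`. -/
lemma pow_mul_iteratedDeriv_mem {n : ℕ} {σ s : ℝ → ℝ} (hs : ContDiff ℝ ∞ s)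
    (hmem : s ∈ cnClosure n (ridgeSpan ℝ σ)) (j : ℕ) (l b : ℝ) :
    (fun t => t ^ j * iteratedDeriv j s (l * t + b)) ∈ cnClosure n (ridgeSpan ℝ σ) := by
  induction j generalizing l with
  | zero => simpa using comp_affine_real_mem l b hmem
  | succ j ih =>
    refine deriv_param_mem_cnClosure
      (G := fun l t => t ^ j * iteratedDeriv j s (l * t + b))
      (G' := fun l t => t ^ (j + 1) * iteratedDeriv (j + 1) s (l * t + b)) ih
      (CnFamily.of_contDiff ?_) (fun l t => ?_) l
    · have h1 : ContDiff ℝ n (iteratedDeriv (j + 1) s) := by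
        rw [iteratedDeriv_eq_iterate]
        exact ContDiff.iterate_deriv' n (j + 1) (hs.of_le (by exact_mod_cast le_top))
      exact (contDiff_snd.pow _).mul (h1.comp ((contDiff_fst.mul contDiff_snd).add contDiff_const))
    · have hdiff := hs.differentiable_iteratedDeriv j (by exact_mod_cast ENat.natCast_lt_top j)
      have h1 := (hdiff (l * t + b)).hasDerivAt
      rw [← iteratedDeriv_succ] at h1
      have h2 : HasDerivAt (fun l : ℝ => l * t + b) t l := by
        simpa using ((hasDerivAt_id l).mul_const t).add_const b
      exact ((h1.comp l h2).const_mul (t ^ j)).congr_deriv (by ring)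

/-- Taking `l = 0` in `t ^ k * s⁽ᵏ⁾ (l * t + b)` leaves a multiple of `t ^ k`. -/
lemma pow_mem_of_iteratedDeriv_ne_zero {n : ℕ} {σ s : ℝ → ℝ} (hs : ContDiff ℝ ∞ s)
    (hmem : s ∈ cnClosure n (ridgeSpan ℝ σ)) {k : ℕ} {b : ℝ} (hb : iteratedDeriv k s b ≠ 0) :
    (fun t : ℝ => t ^ k) ∈ cnClosure n (ridgeSpan ℝ σ) := by
  have := Submodule.smul_mem _ (iteratedDeriv k s b)⁻¹ (pow_mul_iteratedDeriv_mem hs hmem k 0 b)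
  convert this using 1
  funext t
  simp only [zero_mul, zero_add, Pi.smul_apply, smul_eq_mul]
  field_simp

/-- A mollification is an average of translates of the activation. -/
lemma convolution_mem {n : ℕ} {σ φ : ℝ → ℝ} (hσ : ContDiff ℝ n σ) (hφ : Continuous φ)
    (hφc : HasCompactSupport φ) :
    (φ ⋆[ContinuousLinearMap.lsmul ℝ ℝ, volume] σ) ∈ cnClosure n (ridgeSpan ℝ σ) := by
  have hfam : CnFamily n fun y t : ℝ => φ y * σ (t - y) :=
    (CnFamily.of_contDiff (H := fun y t : ℝ => σ (t - y))
      (hσ.comp (contDiff_snd.sub contDiff_fst))).mul hφ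
  have hmem := hfam.integral_mem (ν := volume) (W := ridgeSpan ℝ σ) hφc fun y =>
    Submodule.smul_mem _ (φ y) (by
      simpa [sub_eq_add_neg] using comp_affine_real_mem 1 (-y) (activation_mem hσ))
  convert hmem using 1
  funext t
  rw [convolution_def]
  simp only [ContinuousLinearMap.lsmul_apply, smul_eq_mul]
  refine (setIntegral_eq_integral_of_forall_compl_eq_zero fun y hy => ?_).symm
  rw [image_eq_zero_of_notMem_tsupport hy, zero_mul]

/-- The polynomial functions of degree less than `k`, as functions on `ℝ`. -/
def polyLT (k : ℕ) : Submodule ℝ (ℝ → ℝ) :=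
  Submodule.span ℝ (range fun j : Fin k => fun t : ℝ => t ^ (j : ℕ))

lemma exists_eval_of_mem_polyLT {k : ℕ} {f : ℝ → ℝ} (hf : f ∈ polyLT k) :
    ∃ p : Polynomial ℝ, ∀ x, f x = p.eval x := by
  obtain ⟨c, rfl⟩ := (Submodule.mem_span_range_iff_exists_fun ℝ).1 hf
  refine ⟨∑ j, Polynomial.C (c j) * Polynomial.X ^ (j : ℕ), fun x => ?_⟩
  simp [Polynomial.eval_finsetSum]

lemma exists_antideriv_of_mem_polyLT {k : ℕ} {f : ℝ → ℝ} (hf : f ∈ polyLT k) :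
    ∃ g ∈ polyLT (k + 1), ∀ t, HasDerivAt g (f t) t := by
  induction hf using Submodule.span_induction with
  | mem f hf =>
    obtain ⟨j, rfl⟩ := hf
    refine ⟨((j : ℝ) + 1)⁻¹ • fun t : ℝ => t ^ ((j : ℕ) + 1),
      Submodule.smul_mem _ _ (Submodule.subset_span ⟨j.succ, by simp⟩), fun t => ?_⟩
    refine ((hasDerivAt_pow ((j : ℕ) + 1) t).const_smul ((j : ℝ) + 1)⁻¹).congr_deriv ?_
    have : ((j : ℕ) : ℝ) + 1 ≠ 0 := by positivity
    simp only [smul_eq_mul, Nat.cast_add, Nat.cast_one, add_tsub_cancel_right]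
    field_simp
  | zero => exact ⟨0, zero_mem _, fun t => hasDerivAt_const t 0⟩
  | add f g _ _ hf hg =>
    obtain ⟨F, hF, hF'⟩ := hf
    obtain ⟨G, hG, hG'⟩ := hg
    exact ⟨F + G, add_mem hF hG, fun t => (hF' t).add (hG' t)⟩
  | smul a f _ hf =>
    obtain ⟨F, hF, hF'⟩ := hf
    exact ⟨a • F, Submodule.smul_mem _ _ hF, fun t => (hF' t).const_smul a⟩

lemma mem_polyLT_of_iteratedDeriv_eq_zero {k : ℕ} {s : ℝ → ℝ} (hs : ContDiff ℝ ∞ s)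
    (h : ∀ t, iteratedDeriv k s t = 0) : s ∈ polyLT k := by
  induction k generalizing s with
  | zero =>
    have : s = 0 := funext fun t => by simpa using h t
    simp [this]
  | succ k ih =>
    obtain ⟨g, hg, hg'⟩ := exists_antideriv_of_mem_polyLT
      (ih (contDiff_infty_iff_deriv.1 hs).2 fun t => by rw [← iteratedDeriv_succ']; exact h t)
    have hd (t : ℝ) : HasDerivAt (s - g) 0 t := by
      simpa using ((hs.differentiable (by simp)) t).hasDerivAt.sub (hg' t)
    have hconst := is_const_of_deriv_eq_zero (fun t => (hd t).differentiableAt)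
      fun t => (hd t).deriv
    have h1 : (fun _ => 1 : ℝ → ℝ) ∈ polyLT (k + 1) := Submodule.subset_span ⟨0, by simp⟩
    have : s = g + (s 0 - g 0) • fun _ => 1 := funext fun t => by
      have := hconst t 0
      simp only [Pi.sub_apply] at this
      simp only [Pi.add_apply, Pi.smul_apply, smul_eq_mul, mul_one]
      linarith
    rw [this]
    exact add_mem hg (Submodule.smul_mem _ _ h1)

/-- If the `k`-th derivative of every mollification of `σ` vanishes, the mollifications are
polynomials of degree less than `k`, and so is their pointwise limit `σ`, because a
finite-dimensional space of functions is closed under pointwise limits. -/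
lemma mem_polyLT_of_mollifications {σ : ℝ → ℝ} (hσ : Continuous σ) {k : ℕ}
    (h : ∀ φ : ℝ → ℝ, ContDiff ℝ ∞ φ → HasCompactSupport φ → ∀ b,
      iteratedDeriv k (φ ⋆[ContinuousLinearMap.lsmul ℝ ℝ, volume] σ) b = 0) :
    σ ∈ polyLT k := by
  let φ : ℕ → ContDiffBump (0 : ℝ) := fun i =>
    ⟨1 / (i + 1) / 2, 1 / (i + 1), by positivity, half_lt_self (by positivity)⟩
  have hlim : Tendsto (fun i => (φ i).normed volume ⋆[ContinuousLinearMap.lsmul ℝ ℝ, volume] σ)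
      atTop (𝓝 σ) :=
    tendsto_pi_nhds.2 fun x => ContDiffBump.convolution_tendsto_right_of_continuous
      tendsto_one_div_add_atTop_nhds_zero_nat hσ x
  have : FiniteDimensional ℝ (polyLT k) := FiniteDimensional.span_of_finite ℝ (finite_range _)
  refine (Submodule.closed_of_finiteDimensional (polyLT k)).mem_of_tendsto hlim
    (Eventually.of_forall fun i => ?_)
  exact mem_polyLT_of_iteratedDeriv_eq_zero
    ((φ i).hasCompactSupport_normed.contDiff_convolution_left (n := ⊤) _
      (φ i).contDiff_normed hσ.locallyIntegrable)
    (h _ (φ i).contDiff_normed (φ i).hasCompactSupport_normed)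

lemma monomial_mem {n : ℕ} {σ : ℝ → ℝ} (hσ : ContDiff ℝ n σ)
    (hσpoly : ¬ ∃ p : Polynomial ℝ, ∀ x : ℝ, σ x = p.eval x) (k : ℕ) :
    (fun t : ℝ => t ^ k) ∈ cnClosure n (ridgeSpan ℝ σ) := by
  have : ∃ φ : ℝ → ℝ, ContDiff ℝ ∞ φ ∧ HasCompactSupport φ ∧ ∃ b,
      iteratedDeriv k (φ ⋆[ContinuousLinearMap.lsmul ℝ ℝ, volume] σ) b ≠ 0 := by
    by_contra! hcon
    exact hσpoly (exists_eval_of_mem_polyLT (mem_polyLT_of_mollifications hσ.continuous hcon))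
  obtain ⟨φ, hφ, hφc, b, hb⟩ := this
  exact pow_mem_of_iteratedDeriv_ne_zero
    (hφc.contDiff_convolution_left (n := ⊤) _ hφ hσ.continuous.locallyIntegrable)
    (convolution_mem hσ hφ.continuous hφc) hb

/-! ### The exponential function -/

/-- The partial sums of the exponential series. -/
noncomputable def expSum (N : ℕ) (t : ℝ) : ℝ := ∑ j ∈ Finset.range N, t ^ j / (j.factorial : ℝ)

lemma contDiff_expSum (N : ℕ) : ContDiff ℝ ∞ (expSum N) := by
  unfold expSum
  fun_prop

/-- The truncated subtraction is harmless: `expSum 0` is the zero function. -/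
lemma hasDerivAt_expSum (N : ℕ) (t : ℝ) : HasDerivAt (expSum N) (expSum (N - 1) t) t := by
  cases N with
  | zero =>
    have : expSum 0 = fun _ => 0 := by funext; simp [expSum]
    simpa [this] using hasDerivAt_const t (0 : ℝ)
  | succ N =>
    have h : HasDerivAt (fun t : ℝ => ∑ j ∈ Finset.range (N + 1), t ^ j / (j.factorial : ℝ))
        (∑ j ∈ Finset.range (N + 1), (j * t ^ (j - 1)) / (j.factorial : ℝ)) t :=
      HasDerivAt.fun_sum fun j _ => (hasDerivAt_pow j t).div_const _
    refine h.congr_deriv ?_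
    rw [Finset.sum_range_succ']
    simp only [expSum, add_tsub_cancel_right, Nat.factorial_succ, Nat.cast_mul]
    simp only [CharP.cast_eq_zero, zero_mul, zero_div, add_zero]
    refine Finset.sum_congr rfl fun j _ => ?_
    have : ((j + 1 : ℕ) : ℝ) ≠ 0 := by positivity
    field_simp

/-- Derivatives of the remainders of the exponential series are again remainders, so uniform
convergence of the series gives `C^n` convergence. -/
lemma iteratedDeriv_exp_sub_expSum (N m : ℕ) :
    iteratedDeriv m (Real.exp - expSum N) = Real.exp - expSum (N - m) := by
  induction m with
  | zero => simp
  | succ m ih =>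
    rw [iteratedDeriv_succ, ih]
    funext t
    exact ((Real.hasDerivAt_exp t).sub (hasDerivAt_expSum (N - m) t)).deriv

lemma exp_mem {n : ℕ} {σ : ℝ → ℝ} (hσ : ContDiff ℝ n σ)
    (hσpoly : ¬ ∃ p : Polynomial ℝ, ∀ x : ℝ, σ x = p.eval x) :
    Real.exp ∈ cnClosure n (ridgeSpan ℝ σ) := by
  have hle (m : ℕ) : (m : WithTop ℕ∞) ≤ ∞ := by exact_mod_cast le_top
  refine mem_cnClosure_of_close Real.contDiff_exp fun K hK ε hε => ?_
  obtain ⟨R, hR⟩ := hK.isBounded.exists_norm_le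
  have hunif : TendstoUniformlyOn expSum Real.exp atTop K := by
    rw [Real.exp_eq_exp_ℝ, NormedSpace.exp_eq_tsum_div]
    refine tendstoUniformlyOn_tsum_nat (Real.summable_pow_div_factorial R) fun j t ht => ?_
    rw [norm_div, norm_pow, Real.norm_natCast]
    gcongr
    exact hR t ht
  obtain ⟨N, hN⟩ := eventually_atTop.1 (Metric.tendstoUniformlyOn_iff.1 hunif ε hε)
  refine ⟨expSum (N + n), ?_, fun m hm t ht => ?_⟩
  · have : expSum (N + n) = ∑ j ∈ Finset.range (N + n),
        ((j.factorial : ℝ)⁻¹ • fun t : ℝ => t ^ j) := by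
      funext t
      simp [expSum, div_eq_inv_mul]
    rw [this]
    exact sum_mem fun j _ => Submodule.smul_mem _ _ (monomial_mem hσ hσpoly j)
  · rw [← iteratedFDeriv_sub_apply (Real.contDiff_exp.contDiffAt)
      ((contDiff_expSum _).contDiffAt.of_le (hle m)), norm_iteratedFDeriv_eq_norm_iteratedDeriv,
      iteratedDeriv_exp_sub_expSum]
    exact hN (N + n - m) (by omega) t ht

/-! ### Several variables: the algebra of exponentials and its kernel -/

/-- The algebra of functions on `E` generated by the exponentials `x ↦ exp (L x)`. -/
def expAlgebra (E : Type*) [NormedAddCommGroup E] [NormedSpace ℝ E] : Subalgebra ℝ (E → ℝ) :=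
  Algebra.adjoin ℝ (range fun L : E →L[ℝ] ℝ => fun x => Real.exp (L x))

/-- A product of exponentials is an exponential, so the algebra is the linear span of the
exponentials, each of which is the composition of `exp` with a linear form. -/
lemma mem_of_mem_expAlgebra {n : ℕ} {σ : ℝ → ℝ} (hσ : ContDiff ℝ n σ)
    (hσpoly : ¬ ∃ p : Polynomial ℝ, ∀ x : ℝ, σ x = p.eval x) {f : E → ℝ}
    (hf : f ∈ expAlgebra E) : f ∈ cnClosure n (ridgeSpan E σ) := by
  rw [expAlgebra, ← Subalgebra.mem_toSubmodule, Algebra.adjoin_eq_span] at hf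
  refine Submodule.span_le.2 (fun g hg => ?_) hf
  have : ∃ L : E →L[ℝ] ℝ, g = fun x => Real.exp (L x) := by
    induction hg using Submonoid.closure_induction with
    | mem g hg => exact hg.imp fun _ h => h.symm
    | one => exact ⟨0, by funext; simp⟩
    | mul g g' _ _ h h' =>
      obtain ⟨L, rfl⟩ := h
      obtain ⟨L', rfl⟩ := h'
      exact ⟨L + L', by funext; simp [Real.exp_add]⟩
  obtain ⟨L, rfl⟩ := this
  simpa using comp_affine_mem L 0 (exp_mem hσ hσpoly)

/-- A function in the algebra of exponentials with a strict maximum at the origin; on a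
compact neighbourhood where it is positive, its normalized powers form an approximate identity. -/
noncomputable def coshBump {d : ℕ} (C : ℝ) (x : EuclideanSpace ℝ (Fin d)) : ℝ :=
  C - ∑ i, Real.cosh (x i)

lemma contDiff_coshBump {d : ℕ} (C : ℝ) {n : WithTop ℕ∞} :
    ContDiff ℝ n (coshBump (d := d) C) := by
  unfold coshBump
  refine contDiff_const.sub (ContDiff.sum fun i _ => Real.contDiff_cosh.comp ?_)
  exact (EuclideanSpace.proj (𝕜 := ℝ) i).contDiff

lemma coshBump_mem_expAlgebra {d : ℕ} (C : ℝ) :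
    coshBump (d := d) C ∈ expAlgebra (EuclideanSpace ℝ (Fin d)) := by
  have h (L : EuclideanSpace ℝ (Fin d) →L[ℝ] ℝ) : (fun x => Real.exp (L x)) ∈ expAlgebra _ :=
    Algebra.subset_adjoin ⟨L, rfl⟩
  have : coshBump (d := d) C = algebraMap ℝ _ C - ∑ i, (2⁻¹ : ℝ) •
      ((fun x => Real.exp (EuclideanSpace.proj (𝕜 := ℝ) i x)) +
        fun x => Real.exp ((-EuclideanSpace.proj (𝕜 := ℝ) i) x)) := by
    funext x
    simp [coshBump, Real.cosh_eq, div_eq_inv_mul, mul_add]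
  rw [this]
  exact sub_mem (Subalgebra.algebraMap_mem _ C)
    (sum_mem fun i _ => Subalgebra.smul_mem _ (add_mem (h _) (h _)) _)

lemma coshBump_lt {d : ℕ} (C : ℝ) {x : EuclideanSpace ℝ (Fin d)} (hx : x ≠ 0) :
    coshBump C x < coshBump (d := d) C 0 := by
  obtain ⟨i, hi⟩ : ∃ i, x i ≠ 0 := by
    by_contra! h
    exact hx (PiLp.ext h)
  refine sub_lt_sub_left (Finset.sum_lt_sum (fun j _ => ?_) ⟨i, Finset.mem_univ i, ?_⟩) C
  · simp
  · simpa using Real.one_lt_cosh.2 hi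

lemma exists_coshBump_pos {d : ℕ} {S : Set (EuclideanSpace ℝ (Fin d))} (hS : IsCompact S) :
    ∃ C, ∀ x ∈ S, 0 < coshBump C x := by
  obtain ⟨M, hM⟩ := hS.exists_bound_of_continuousOn
    (contDiff_coshBump (d := d) 0 (n := 0)).continuous.continuousOn
  refine ⟨M + 1, fun x hx => ?_⟩
  have := (abs_le.1 (hM x hx)).1
  simp only [coshBump] at this ⊢
  linarith

/-! ### Approximation of arbitrary functions -/

/-- The approximation is the convolution of `F` with a normalized power of the kernel. As an average
of translates of `F` it is close to `F`; by a change of variable it agrees on the ball with an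
average of translates of the kernel, hence is a limit of networks. -/
lemma exists_mem_close_of_support {n d : ℕ} {σ : ℝ → ℝ} (hσ : ContDiff ℝ n σ)
    (hσpoly : ¬ ∃ p : Polynomial ℝ, ∀ x : ℝ, σ x = p.eval x)
    {F : EuclideanSpace ℝ (Fin d) → ℝ} (hF : ContDiff ℝ n F) {R : ℝ} (hR : 0 < R)
    (hsupp : ∀ x, F x ≠ 0 → x ∈ Metric.closedBall 0 R)
    {K : Set (EuclideanSpace ℝ (Fin d))} (hK : IsCompact K) (hKR : K ⊆ Metric.ball 0 R)
    {ε : ℝ} (hε : 0 < ε) :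
    ∃ f ∈ cnClosure n (ridgeSpan (EuclideanSpace ℝ (Fin d)) σ), CnClose n K ε F f := by
  set B : Set (EuclideanSpace ℝ (Fin d)) := Metric.closedBall 0 R
  set S : Set (EuclideanSpace ℝ (Fin d)) := Metric.closedBall 0 (2 * R)
  have hB : IsCompact B := isCompact_closedBall _ _
  have hS : IsCompact S := isCompact_closedBall _ _
  obtain ⟨C, hC⟩ := exists_coshBump_pos hS
  set q : EuclideanSpace ℝ (Fin d) → ℝ := coshBump C
  have hq : Continuous q := (contDiff_coshBump C (n := 0)).continuous
  have h0S : (0 : EuclideanSpace ℝ (Fin d)) ∈ S := by simp [S, hR.le]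
  have hSint : interior S = Metric.ball 0 (2 * R) := interior_closedBall _ (by positivity)
  have h0 : (0 : EuclideanSpace ℝ (Fin d)) ∈ interior S := by rw [hSint]; simpa using hR
  -- The kernels `q ^ k / ∫ q ^ k` on `S` concentrate at the origin.
  have hlim : Tendsto (fun k : ℕ => (∫ y in S, q y ^ k)⁻¹ • ∫ y in S, q y ^ k • ‖y‖) atTop
      (𝓝 0) := by
    have := tendsto_setIntegral_pow_smul_of_unique_maximum_of_isCompact_of_continuousOn
      (μ := (volume : Measure (EuclideanSpace ℝ (Fin d)))) (c := q)
      (g := fun y => ‖y‖) (x₀ := 0)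
      hS hq.continuousOn (fun y _ hy => coshBump_lt C hy) (fun y hy => (hC y hy).le) (hC 0 h0S)
      (subset_closure h0) continuous_norm.continuousOn
    simpa only [norm_zero] using this
  have hfam : CnFamily n fun y x : EuclideanSpace ℝ (Fin d) => F (x - y) :=
    CnFamily.of_contDiff (hF.comp (contDiff_snd.sub contDiff_fst))
  obtain ⟨δ, hδ, hclose⟩ := hfam.close_of_concentrated
    (ν := (volume : Measure (EuclideanSpace ℝ (Fin d)))) hS 0 hK hε
  obtain ⟨k, hk⟩ := (hlim.eventually_lt_const hδ).exists
  have hpos : 0 < ∫ y in S, q y ^ k := by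
    have hi : IntegrableOn (fun y => q y ^ k) S := (hq.pow k).continuousOn.integrableOn_compact hS
    rw [setIntegral_pos_iff_support_of_nonneg_ae ?_ hi]
    · refine lt_of_lt_of_le (isOpen_interior.measure_pos volume ⟨0, h0⟩)
        (measure_mono fun y hy => ⟨?_, interior_subset hy⟩)
      exact pow_ne_zero _ (hC y (interior_subset hy)).ne'
    · exact (ae_restrict_mem hS.measurableSet).mono fun y hy => pow_nonneg (hC y hy).le k
  set c : ℝ := (∫ y in S, q y ^ k)⁻¹
  have happrox := hclose S subset_rfl hS (fun y => c * q y ^ k) (by fun_prop)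
    (fun y hy => mul_nonneg (inv_nonneg.2 hpos.le) (pow_nonneg (hC y hy).le k))
    (by rw [integral_const_mul]; exact inv_mul_cancel₀ hpos.ne')
    (by simpa only [sub_zero, mul_assoc, integral_const_mul, smul_eq_mul] using hk)
  simp only [sub_zero] at happrox
  have hmem : (fun x => ∫ y in B, F y * (c * q (x - y) ^ k)) ∈ cnClosure n (ridgeSpan _ σ) := by
    refine ((CnFamily.of_contDiff
      (H := fun y x : EuclideanSpace ℝ (Fin d) => c * q (x - y) ^ k) ?_).mul
      hF.continuous).integral_mem hB fun y => Submodule.smul_mem _ (F y)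
        (Submodule.smul_mem _ c ?_)
    · exact contDiff_const.mul
        (((contDiff_coshBump C).comp (contDiff_snd.sub contDiff_fst)).pow k)
    · have := mem_of_mem_expAlgebra hσ hσpoly (pow_mem (coshBump_mem_expAlgebra (d := d) C) k)
      simpa [sub_eq_add_neg] using comp_affine_mem (ContinuousLinearMap.id ℝ _) (-y) this
  -- For `x` in the ball, the support of `y ↦ F (x - y)` lies in `S`.
  have heq : EqOn (fun x => ∫ y in S, c * q y ^ k * F (x - y))
      (fun x => ∫ y in B, F y * (c * q (x - y) ^ k)) (Metric.ball 0 R) := by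
    intro x hx
    simp only
    rw [setIntegral_eq_integral_of_forall_compl_eq_zero,
      setIntegral_eq_integral_of_forall_compl_eq_zero,
      ← integral_sub_left_eq_self _ volume x]
    · congr 1
      funext y
      rw [sub_sub_cancel]
      ring
    · intro y hy
      rw [not_imp_comm.1 (hsupp y) hy, zero_mul]
    · intro y hy
      rw [not_imp_comm.1 (hsupp (x - y)) fun hxy => hy ?_, mul_zero]
      simp only [B, S, mem_closedBall_zero_iff, mem_ball_zero_iff] at hx hxy ⊢
      have := norm_sub_le x (x - y)
      rw [sub_sub_cancel] at this
      linarith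
  refine ⟨_, hmem, fun m hm x hx => ?_⟩
  have hev := heq.eventuallyEq_of_mem (Metric.isOpen_ball.mem_nhds (hKR hx))
  rw [← (hev.iteratedFDeriv ℝ m).eq_of_nhds]
  exact happrox m hm x hx

/-- The general case reduces to that of compact support by a cutoff. -/
lemma exists_mem_close {n d : ℕ} {σ : ℝ → ℝ} (hσ : ContDiff ℝ n σ)
    (hσpoly : ¬ ∃ p : Polynomial ℝ, ∀ x : ℝ, σ x = p.eval x)
    {F : EuclideanSpace ℝ (Fin d) → ℝ} (hF : ContDiff ℝ n F)
    {K : Set (EuclideanSpace ℝ (Fin d))} (hK : IsCompact K) {ε : ℝ} (hε : 0 < ε) :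
    ∃ f ∈ cnClosure n (ridgeSpan (EuclideanSpace ℝ (Fin d)) σ), CnClose n K ε F f := by
  obtain ⟨r, hr, hKr⟩ := hK.isBounded.subset_ball_lt 0 0
  let χ : ContDiffBump (0 : EuclideanSpace ℝ (Fin d)) := ⟨r, r + 1, hr, lt_add_one r⟩
  obtain ⟨f, hf, hFf⟩ := exists_mem_close_of_support hσ hσpoly (F := fun x => χ x * F x)
    (χ.contDiff.mul hF) (R := r + 1) (by positivity)
    (fun x hx => Metric.ball_subset_closedBall <| by
      have : x ∈ Function.support χ := left_ne_zero_of_mul hx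
      rwa [χ.support_eq] at this)
    hK (hKr.trans (Metric.ball_subset_ball (by linarith))) hε
  refine ⟨f, hf, fun m hm x hx => ?_⟩
  have hev : (fun x => χ x * F x) =ᶠ[𝓝 x] F :=
    (χ.eventuallyEq_one_of_mem_ball (hKr hx)).mono fun y hy => by simp [hy]
  rw [← (hev.iteratedFDeriv ℝ m).eq_of_nhds]
  exact hFf m hm x hx

/-- Linear forms on a Euclidean space are inner products with vectors, so the span of the ridge
functions consists of the networks. -/
lemma exists_network_of_mem_ridgeSpan {d : ℕ} {σ : ℝ → ℝ} {g : EuclideanSpace ℝ (Fin d) → ℝ}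
    (hg : g ∈ ridgeSpan (EuclideanSpace ℝ (Fin d)) σ) :
    ∃ (N : ℕ) (w : Fin N → EuclideanSpace ℝ (Fin d)) (b β : Fin N → ℝ),
      g = fun y => ∑ i, β i * σ (⟪w i, y⟫ + b i) := by
  obtain ⟨N, β, s, rfl⟩ := Submodule.mem_span_set'.1 hg
  choose p hp using fun i => (s i).2
  refine ⟨N, fun i => (InnerProductSpace.toDual ℝ _).symm (p i).1, fun i => (p i).2, β, ?_⟩
  funext y
  simp [← hp]

end Density

/-- Hornik's approximation theorem: a single-hidden-layer network with a
`C^n` non-polynomial activation approximates any `C^n` function together with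
all its derivatives up to order `n`, uniformly on compact sets. -/
theorem hornik_approximation
    (n d : ℕ) (σ : ℝ → ℝ) (hσ : ContDiff ℝ n σ)
    (hσpoly : ¬ ∃ p : Polynomial ℝ, ∀ x : ℝ, σ x = p.eval x)
    (F : EuclideanSpace ℝ (Fin d) → ℝ) (hF : ContDiff ℝ n F)
    (K : Set (EuclideanSpace ℝ (Fin d))) (hK : IsCompact K)
    (ε : ℝ) (hε : 0 < ε) :
    ∃ (N : ℕ) (w : Fin N → EuclideanSpace ℝ (Fin d)) (b β : Fin N → ℝ),
      ∀ m : ℕ, m ≤ n → ∀ x ∈ K,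
        ‖iteratedFDeriv ℝ m F x -
          iteratedFDeriv ℝ m (fun y => ∑ i, β i * σ (⟪w i, y⟫ + b i)) x‖ < ε := by
  obtain ⟨f, hf, hFf⟩ := exists_mem_close hσ hσpoly hF hK (half_pos hε)
  obtain ⟨g, hg, -, hfg⟩ := hf.2 K hK (ε / 2) (half_pos hε)
  obtain ⟨N, w, b, β, rfl⟩ := exists_network_of_mem_ridgeSpan hg
  refine ⟨N, w, b, β, ?_⟩
  have h := hFf.trans hfg
  rwa [add_halves] at h
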